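/- Let ψ and φ be unit vectors in a complex Hilbert space H, and let (P_k)_{k ∈ K} be a finite family of orthogonal projections on H whose ranges are pairwise orthogonal (P_j ∘ P_k = 0 for j ≠ k). Then Σ_{k ∈ K} | ‖P_k ψ‖² − ‖P_k φ‖² | ≤ 4 ‖ψ − φ‖. -/

import Mathlib

/-! For `a = ‖P k ψ‖`, `b = ‖P k φ‖` the reverse triangle inequality gives
`|a ^ 2 - b ^ 2| = |a - b| (a + b) ≤ ‖P k (ψ - φ)‖ (a + b)`. Summing over `k`, Cauchy–Schwarz and
Bessel's inequality `∑ ‖P k x‖ ^ 2 ≤ ‖x‖ ^ 2` bound the total by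
`‖ψ - φ‖ (‖ψ‖ + ‖φ‖) = 2 ‖ψ - φ‖`, which is stronger than the claim. Bessel's inequality holds
because `∑ k, P k` is again an orthogonal projection. -/

theorem norm_sq_eq_re_inner_of_proj {H : Type*} [NormedAddCommGroup H] [InnerProductSpace ℂ H]
    [CompleteSpace H] (A : H →L[ℂ] H) (hsa : IsSelfAdjoint A) (hid : A ∘L A = A) (x : H) :
    ‖A x‖ ^ 2 = (inner ℂ (A x) x).re := by
  have h : inner ℂ (A (A x)) x = inner ℂ (A x) (A x) := hsa.isSymmetric (A x) x
  have h2 : A (A x) = A x := congrArg (fun B : H →L[ℂ] H => B x) hid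
  rw [h2] at h
  rw [h, inner_self_eq_norm_sq_to_K]
  norm_cast

/-- Bessel's inequality for a finite family of mutually orthogonal projections. -/
theorem sum_norm_sq_proj_le {H : Type*} [NormedAddCommGroup H] [InnerProductSpace ℂ H]
    [CompleteSpace H] {K : Type*} [Fintype K] (P : K → (H →L[ℂ] H))
    (hPsa : ∀ k, IsSelfAdjoint (P k)) (hPidem : ∀ k, P k ∘L P k = P k)
    (horth : ∀ j k, j ≠ k → P j ∘L P k = 0) (x : H) :
    ∑ k, ‖P k x‖ ^ 2 ≤ ‖x‖ ^ 2 := by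
  classical
  have hsa : IsSelfAdjoint (∑ k, P k) := by
    rw [IsSelfAdjoint, star_sum]
    exact Finset.sum_congr rfl fun k _ => hPsa k
  have hid : (∑ k, P k) ∘L (∑ k, P k) = ∑ k, P k := by
    change (∑ k, P k) * (∑ k, P k) = ∑ k, P k
    rw [Finset.sum_mul_sum]
    refine Finset.sum_congr rfl fun j _ => ?_
    refine (Finset.sum_eq_single j (fun k _ hk => horth j k hk.symm) (by simp)).trans ?_
    exact hPidem j
  have hS : ∑ k, ‖P k x‖ ^ 2 = (inner ℂ ((∑ k, P k) x) x).re := by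
    rw [sum_apply, sum_inner, Complex.re_sum]
    exact Finset.sum_congr rfl fun k _ =>
      norm_sq_eq_re_inner_of_proj (P k) (hPsa k) (hPidem k) x
  have hQ := norm_sq_eq_re_inner_of_proj (∑ k, P k) hsa hid x
  have hcs : (inner ℂ ((∑ k, P k) x) x).re ≤ ‖(∑ k, P k) x‖ * ‖x‖ :=
    re_inner_le_norm (𝕜 := ℂ) _ _
  -- With `q = ‖(∑ k, P k) x‖`, the sum equals `q ^ 2` and satisfies `q ^ 2 ≤ q * ‖x‖`.
  nlinarith [sq_nonneg (‖(∑ k, P k) x‖ - ‖x‖)]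

/-- Total-variation bound for projective measurements on pure states: for unit vectors
`ψ`, `φ` and a finite family of orthogonal projections `P k` with pairwise orthogonal
ranges, `Σ_k | ‖P_k ψ‖² − ‖P_k φ‖² | ≤ 4 ‖ψ − φ‖`. -/
theorem stmt_4 {H : Type*} [NormedAddCommGroup H] [InnerProductSpace ℂ H] [CompleteSpace H]
    {K : Type*} [Fintype K]
    (P : K → (H →L[ℂ] H))
    (hPsa : ∀ k, IsSelfAdjoint (P k)) (hPidem : ∀ k, P k ∘L P k = P k)
    (horth : ∀ j k, j ≠ k → P j ∘L P k = 0)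
    (ψ φ : H) (hψ : ‖ψ‖ = 1) (hφ : ‖φ‖ = 1) :
    ∑ k, |‖P k ψ‖ ^ 2 - ‖P k φ‖ ^ 2| ≤ 4 * ‖ψ - φ‖ := by
  have hB := sum_norm_sq_proj_le P hPsa hPidem horth
  have hCS : ∀ x y : H, ∑ k, ‖P k x‖ * ‖P k y‖ ≤ ‖x‖ * ‖y‖ := fun x y => by
    refine abs_le_of_sq_le_sq' ?_ (by positivity) |>.2
    calc (∑ k, ‖P k x‖ * ‖P k y‖) ^ 2
        ≤ (∑ k, ‖P k x‖ ^ 2) * ∑ k, ‖P k y‖ ^ 2 := Finset.sum_mul_sq_le_sq_mul_sq _ _ _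
      _ ≤ ‖x‖ ^ 2 * ‖y‖ ^ 2 := by
        gcongr
        · exact hB x
        · exact hB y
      _ = (‖x‖ * ‖y‖) ^ 2 := by ring
  calc ∑ k, |‖P k ψ‖ ^ 2 - ‖P k φ‖ ^ 2|
      ≤ ∑ k, (‖P k (ψ - φ)‖ * ‖P k ψ‖ + ‖P k (ψ - φ)‖ * ‖P k φ‖) := by
        refine Finset.sum_le_sum fun k _ => ?_
        rw [sq_sub_sq, abs_mul, abs_of_nonneg (by positivity), mul_comm, ← mul_add, map_sub]
        gcongr
        exact abs_norm_sub_norm_le _ _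
    _ ≤ ‖ψ - φ‖ * ‖ψ‖ + ‖ψ - φ‖ * ‖φ‖ := by
        rw [Finset.sum_add_distrib]
        exact add_le_add (hCS _ _) (hCS _ _)
    _ ≤ 4 * ‖ψ - φ‖ := by
        rw [hψ, hφ]
        linarith [norm_nonneg (ψ - φ)]
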